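/- There exists a dense Gδ subset R of P([0,1]^d) (with the weak topology) such that every measure μ ∈ R satisfies the multifractal formalism at every exponent h ∈ [0,d]: dim_H E_μ(h) = inf_{q ∈ ℝ} (qh − τ_μ(q)). -/

import Mathlib

open MeasureTheory Metric Filter Set
open scoped ENNReal NNReal Topology

noncomputable section

/-- The unit cube `[0,1]^d` of `ℝ^d` equipped with the supremum metric,
viewed as a (compact) metric space. -/
abbrev Cube (d : ℕ) : Type := ↥(Set.Icc (0 : Fin d → ℝ) 1)

/-- The local (lower) dimension `h_μ(x) = liminf_{r → 0⁺} log μ(B(x,r)) / log r`. -/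
noncomputable def locDim {d : ℕ} (μ : Measure (Cube d)) (x : Cube d) : EReal :=
  Filter.liminf
    (fun r : ℝ => ENNReal.log (μ (Metric.ball x r)) / (Real.log r : EReal))
    (nhdsWithin 0 (Set.Ioi 0))

/-- The level set `E_μ(h) = {x : h_μ(x) = h}`. -/
def levelSet {d : ℕ} (μ : Measure (Cube d)) (h : ℝ) : Set (Cube d) :=
  {x | locDim μ x = (h : EReal)}

/-- The dyadic cube `I_{j,k} = ∏ᵢ [kᵢ 2^{-j}, (kᵢ+1) 2^{-j})`, as a subset of the cube. -/
def dyadicCube (d j : ℕ) (k : Fin d → Fin (2 ^ j)) : Set (Cube d) :=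
  {x | ∀ i, (k i : ℝ) / 2 ^ j ≤ (x : Fin d → ℝ) i ∧ (x : Fin d → ℝ) i < ((k i : ℝ) + 1) / 2 ^ j}

/-- `s_j(q) = Σ_{Q ∈ G_j, μ(Q) ≠ 0} μ(Q)^q`. -/
def dyadicSum {d : ℕ} (μ : Measure (Cube d)) (q : ℝ) (j : ℕ) : ℝ :=
  ∑ k ∈ Finset.univ.filter (fun k : Fin d → Fin (2 ^ j) => μ (dyadicCube d j k) ≠ 0),
    (μ (dyadicCube d j k)).toReal ^ q

/-- The `L^q`-spectrum `τ_μ(q) = liminf_j -(1/j) log₂ s_j(q)`. -/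
def lqSpectrum {d : ℕ} (μ : Measure (Cube d)) (q : ℝ) : EReal :=
  Filter.liminf
    (fun j : ℕ => ((-(1 / (j : ℝ)) * Real.logb 2 (dyadicSum μ q j) : ℝ) : EReal))
    Filter.atTop

theorem log_measure_div_log_le {α : Type*} [MeasurableSpace α] {μ : Measure α} {s : Set α}
    {a r : ℝ} (ha : 0 < a) (hr1 : r ≤ 1) (hr0 : 0 ≤ r) (h : ENNReal.ofReal a ≤ μ s) :
    ENNReal.log (μ s) / (Real.log r : EReal) ≤ ((Real.log a / Real.log r : ℝ) : EReal) := by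
  rw [EReal.coe_div, ← ENNReal.log_ofReal_of_pos ha]
  exact EReal.div_le_div_right_of_nonpos (mod_cast Real.log_nonpos hr0 hr1)
    (ENNReal.log_le_log h)

theorem rpow_lt_measure_of_log_div_lt {α : Type*} [MeasurableSpace α] {μ : Measure α} {s : Set α}
    {r t : ℝ} (hr0 : 0 < r) (hr1 : r < 1)
    (h : ENNReal.log (μ s) / (Real.log r : EReal) < (t : EReal)) :
    ENNReal.ofReal (r ^ t) < μ s := by
  contrapose! h
  have hlog : Real.log r < 0 := Real.log_neg hr0 hr1
  have key := EReal.div_le_div_right_of_nonpos (c := (Real.log r : EReal))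
    (mod_cast hlog.le) (ENNReal.log_le_log h)
  rwa [ENNReal.log_ofReal_of_pos (Real.rpow_pos_of_pos hr0 t), Real.log_rpow hr0,
    ← EReal.coe_div, mul_div_cancel_right₀ _ hlog.ne] at key

/-- If every point of `S` has arbitrarily small balls of `μ`-mass larger than `r ^ t`, then `S`
has Hausdorff dimension at most `t`. -/
theorem dimH_le_of_frequently_rpow_lt {X : Type*} [MetricSpace X] [SecondCountableTopology X]
    [MeasurableSpace X] [BorelSpace X] (μ : Measure X) [IsFiniteMeasure μ]
    (t : ℝ≥0) (S : Set X)
    (hS : ∀ x ∈ S, ∃ᶠ r in 𝓝[>] (0 : ℝ), ENNReal.ofReal (r ^ (t : ℝ)) < μ (ball x r)) :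
    dimH S ≤ t := by
  have ht : (0 : ℝ) ≤ t := t.2
  have hsmall : ∀ n : ℕ, ∀ x ∈ S, ∃ r : ℝ, 0 < r ∧ r < 1 / ((n : ℝ) + 1) ∧
      ENNReal.ofReal (r ^ (t : ℝ)) < μ (ball x r) := by
    intro n x hx
    have hev : ∀ᶠ r in 𝓝[>] (0 : ℝ), r ∈ Ioo (0 : ℝ) (1 / ((n : ℝ) + 1)) :=
      Ioo_mem_nhdsGT (by positivity)
    obtain ⟨r, h1, h2⟩ := ((hS x hx).and_eventually hev).exists
    exact ⟨r, h2.1, h2.2, h1⟩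
  have hcover : ∀ n : ℕ, ∃ (u : Set X) (r : X → ℝ), u.Countable ∧
      (∀ x ∈ u, 0 < r x ∧ r x < 1 / ((n : ℝ) + 1) ∧
        ENNReal.ofReal (r x ^ (t : ℝ)) < μ (ball x (r x))) ∧
      (u.PairwiseDisjoint fun a => ball a (r a)) ∧ S ⊆ ⋃ x : u, ball (x : X) (4 * r x) := by
    intro n
    choose! r hr using hsmall n
    obtain ⟨u, hu, hdisj, hcov⟩ := Vitali.exists_disjoint_subfamily_covering_enlargement_ball
      S id r (1 / ((n : ℝ) + 1)) (fun a ha => (hr a ha).2.1.le) 4 (by norm_num)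
    refine ⟨u, r, ?_, fun x hx => hr x (hu hx), hdisj, fun x hx => ?_⟩
    · refine hdisj.countable_of_isOpen (fun _ _ => isOpen_ball) fun a ha => ?_
      exact nonempty_ball.2 (hr a (hu ha)).1
    · obtain ⟨b, hb, hsub⟩ := hcov x hx
      exact mem_iUnion.2 ⟨⟨b, hb⟩, hsub (mem_ball_self (hr x hx).1)⟩
  choose u r hu hr hdisj hcov using hcover
  have : ∀ n, Countable (u n) := fun n => (hu n).to_subtype
  apply dimH_le_of_hausdorffMeasure_ne_top
  have hdiam : ∀ n (i : u n), ediam (ball (i : X) (4 * r n i)) ≤ ENNReal.ofReal (8 * r n i) := by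
    intro n i
    rw [← Metric.eball_ofReal]
    refine ediam_eball_le.trans ?_
    rw [← ENNReal.ofReal_ofNat, ← ENNReal.ofReal_mul (by norm_num)]
    apply ENNReal.ofReal_le_ofReal
    linarith
  have hbound := Measure.hausdorffMeasure_le_liminf_tsum (t : ℝ) S
    (fun n : ℕ => ENNReal.ofReal (8 * (1 / ((n : ℝ) + 1)))) (l := atTop)
    (by
      have := (tendsto_one_div_add_atTop_nhds_zero_nat (𝕜 := ℝ)).const_mul 8
      simpa using ENNReal.tendsto_ofReal this)
    (fun n (i : u n) => ball (i : X) (4 * r n i))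
    (Eventually.of_forall fun n i => (hdiam n i).trans (ENNReal.ofReal_le_ofReal
      (by linarith [(hr n i i.2).2.1])))
    (Eventually.of_forall hcov)
  refine ne_top_of_le_ne_top (b := ENNReal.ofReal (8 ^ (t : ℝ)) * μ univ)
    (ENNReal.mul_ne_top ENNReal.ofReal_ne_top (measure_ne_top _ _)) (hbound.trans ?_)
  refine liminf_le_of_frequently_le' (Frequently.of_forall fun n => ?_)
  calc ∑' i : u n, ediam (ball (i : X) (4 * r n i)) ^ (t : ℝ)
      ≤ ∑' i : u n, ENNReal.ofReal (8 ^ (t : ℝ)) * μ (ball (i : X) (r n i)) := by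
        refine ENNReal.tsum_le_tsum fun i => ?_
        obtain ⟨h0, -, h2⟩ := hr n i i.2
        calc ediam (ball (i : X) (4 * r n i)) ^ (t : ℝ)
            ≤ ENNReal.ofReal (8 * r n i) ^ (t : ℝ) := ENNReal.rpow_le_rpow (hdiam n i) ht
          _ = ENNReal.ofReal (8 ^ (t : ℝ)) * ENNReal.ofReal (r n i ^ (t : ℝ)) := by
              rw [ENNReal.ofReal_rpow_of_nonneg (by positivity) ht,
                Real.mul_rpow (by norm_num) h0.le, ENNReal.ofReal_mul (by positivity)]
          _ ≤ _ := by gcongr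
    _ = ENNReal.ofReal (8 ^ (t : ℝ)) * ∑' i : u n, μ (ball (i : X) (r n i)) :=
        ENNReal.tsum_mul_left
    _ ≤ _ := by
        gcongr
        rw [← measure_iUnion]
        · exact measure_mono (subset_univ _)
        · exact fun i j hij => hdisj n i.2 j.2 (fun h => hij (Subtype.ext h))
        · exact fun i => isOpen_ball.measurableSet

/-- The set of points of local dimension at most `h` has Hausdorff dimension at most `h`. -/
theorem dimH_setOf_locDim_le {d : ℕ} (μ : Measure (Cube d)) [IsFiniteMeasure μ] (h : ℝ≥0) :
    dimH {x | locDim μ x ≤ ((h : ℝ) : EReal)} ≤ h := by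
  refine ENNReal.le_of_forall_pos_le_add fun ε hε _ => ?_
  rw [← ENNReal.coe_add]
  refine dimH_le_of_frequently_rpow_lt μ (h + ε) _ fun x hx => ?_
  have hlt : locDim μ x < (((h + ε : ℝ≥0) : ℝ) : EReal) :=
    lt_of_le_of_lt hx (EReal.coe_lt_coe_iff.2 (by push_cast; simpa using hε))
  have hev : ∀ᶠ r in 𝓝[>] (0 : ℝ), r ∈ Ioo (0 : ℝ) 1 := Ioo_mem_nhdsGT one_pos
  refine ((frequently_lt_of_liminf_lt (h := hlt)).and_eventually hev).mono ?_
  rintro r ⟨h1, h2⟩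
  exact rpow_lt_measure_of_log_div_lt h2.1 h2.2 h1

open Classical in
/-- The integer whose `l` binary digits are those of `ω`, with the digits at positions in `Z`
replaced by zero. -/
def digitNum (Z : Set ℕ) (ω : ℕ → Bool) : ℕ → ℕ
  | 0 => 0
  | l + 1 => 2 * digitNum Z ω l + if l ∈ Z then 0 else (ω l).toNat

/-- The real number in `[0,1]` whose binary digits are those of `ω`, with the digits at positions
in `Z` replaced by zero. -/
def digitReal (Z : Set ℕ) (ω : ℕ → Bool) : ℝ := ⨆ l, (digitNum Z ω l : ℝ) / 2 ^ l

theorem digitNum_lt (Z : Set ℕ) (ω : ℕ → Bool) (l : ℕ) : digitNum Z ω l < 2 ^ l := by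
  induction l with
  | zero => simp [digitNum]
  | succ l ih =>
    have := Bool.toNat_le (ω l)
    rw [digitNum, pow_succ]
    split_ifs <;> omega

theorem two_mul_digitNum_le (Z : Set ℕ) (ω : ℕ → Bool) (l : ℕ) :
    2 * digitNum Z ω l ≤ digitNum Z ω (l + 1) := by
  rw [digitNum]; omega

theorem digitNum_succ_le (Z : Set ℕ) (ω : ℕ → Bool) (l : ℕ) :
    digitNum Z ω (l + 1) ≤ 2 * digitNum Z ω l + 1 := by
  have := Bool.toNat_le (ω l)
  rw [digitNum]
  split_ifs <;> omega

theorem monotone_digitNum_div (Z : Set ℕ) (ω : ℕ → Bool) :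
    Monotone fun l => (digitNum Z ω l : ℝ) / 2 ^ l := by
  refine monotone_nat_of_le_succ fun l => ?_
  have h : (2 : ℝ) * digitNum Z ω l ≤ digitNum Z ω (l + 1) := by
    exact_mod_cast two_mul_digitNum_le Z ω l
  rw [pow_succ, div_le_div_iff₀ (by positivity) (by positivity)]
  nlinarith [show (0 : ℝ) < 2 ^ l by positivity]

theorem antitone_digitNum_add_one_div (Z : Set ℕ) (ω : ℕ → Bool) :
    Antitone fun l => ((digitNum Z ω l : ℝ) + 1) / 2 ^ l := by
  refine antitone_nat_of_succ_le fun l => ?_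
  have h : (digitNum Z ω (l + 1) : ℝ) ≤ 2 * digitNum Z ω l + 1 := by
    exact_mod_cast digitNum_succ_le Z ω l
  rw [pow_succ, div_le_div_iff₀ (by positivity) (by positivity)]
  nlinarith [show (0 : ℝ) < 2 ^ l by positivity]

theorem digitNum_div_le (Z : Set ℕ) (ω : ℕ → Bool) (l m : ℕ) :
    (digitNum Z ω l : ℝ) / 2 ^ l ≤ ((digitNum Z ω m : ℝ) + 1) / 2 ^ m := by
  calc (digitNum Z ω l : ℝ) / 2 ^ l
      ≤ (digitNum Z ω (max l m) : ℝ) / 2 ^ (max l m) :=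
        monotone_digitNum_div Z ω (le_max_left l m)
    _ ≤ ((digitNum Z ω (max l m) : ℝ) + 1) / 2 ^ (max l m) := by gcongr; linarith
    _ ≤ _ := antitone_digitNum_add_one_div Z ω (le_max_right l m)

theorem digitReal_le (Z : Set ℕ) (ω : ℕ → Bool) (l : ℕ) :
    digitReal Z ω ≤ ((digitNum Z ω l : ℝ) + 1) / 2 ^ l :=
  ciSup_le fun m => digitNum_div_le Z ω m l

theorem le_digitReal (Z : Set ℕ) (ω : ℕ → Bool) (l : ℕ) :
    (digitNum Z ω l : ℝ) / 2 ^ l ≤ digitReal Z ω :=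
  le_ciSup (f := fun l => (digitNum Z ω l : ℝ) / 2 ^ l)
    ⟨_, by rintro _ ⟨m, rfl⟩; exact digitNum_div_le Z ω m 0⟩ l

theorem digitReal_mem_Icc (Z : Set ℕ) (ω : ℕ → Bool) : digitReal Z ω ∈ Icc (0 : ℝ) 1 := by
  have h1 := le_digitReal Z ω 0
  have h2 := digitReal_le Z ω 0
  simp only [digitNum] at h1 h2
  exact ⟨by simpa using h1, by simpa using h2⟩

theorem digitNum_add_of_Ico_subset (Z : Set ℕ) (ω : ℕ → Bool) {j n : ℕ}
    (h : Ico j (j + n) ⊆ Z) : digitNum Z ω (j + n) = 2 ^ n * digitNum Z ω j := by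
  induction n with
  | zero => simp
  | succ n ih =>
    have hmem : j + n ∈ Z := h ⟨by omega, by omega⟩
    rw [← add_assoc, digitNum, if_pos hmem, ih ((Ico_subset_Ico_right (by omega)).trans h)]
    ring

theorem digitReal_le_of_Ico_subset (Z : Set ℕ) (ω : ℕ → Bool) {j t : ℕ} (hjt : j ≤ t)
    (h : Ico j t ⊆ Z) : digitReal Z ω ≤ (digitNum Z ω j : ℝ) / 2 ^ j + 1 / 2 ^ t := by
  obtain ⟨n, rfl⟩ := Nat.exists_eq_add_of_le hjt
  have h1 := digitReal_le Z ω (j + n)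
  rw [digitNum_add_of_Ico_subset Z ω h] at h1
  refine h1.trans_eq ?_
  push_cast
  rw [pow_add]
  field_simp

theorem eq_of_digitNum_eq (Z : Set ℕ) {ω ω' : ℕ → Bool} {l : ℕ}
    (h : digitNum Z ω l = digitNum Z ω' l) : ∀ i < l, i ∉ Z → ω i = ω' i := by
  induction l with
  | zero => intro i hi; omega
  | succ l ih =>
    have h1 := Bool.toNat_le (ω l)
    have h2 := Bool.toNat_le (ω' l)
    rw [digitNum, digitNum] at h
    have hN : digitNum Z ω l = digitNum Z ω' l := by split_ifs at h <;> omega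
    intro i hi hiZ
    rcases Nat.lt_succ_iff_lt_or_eq.1 hi with hi | rfl
    · exact ih hN i hi hiZ
    · rw [if_neg hiZ, if_neg hiZ] at h
      have h' : (ω i).toNat = (ω' i).toNat := by omega
      revert h'
      cases ω i <;> cases ω' i <;> simp

theorem measurable_digitNum (Z : Set ℕ) (l : ℕ) : Measurable fun ω => digitNum Z ω l := by
  induction l with
  | zero => exact measurable_const
  | succ l ih =>
    simp only [digitNum]
    refine (ih.const_mul 2).add ?_
    split_ifs
    · exact measurable_const
    · exact (measurable_of_countable Bool.toNat).comp (measurable_pi_apply l)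

theorem measurable_digitReal (Z : Set ℕ) : Measurable (digitReal Z) := by
  refine Measurable.iSup fun l => ?_
  exact (measurable_from_nat.comp (measurable_digitNum Z l)).div_const _

/-- The law of an infinite sequence of independent fair coin tosses. -/
def coinMeasure : Measure (ℕ → Bool) :=
  Measure.infinitePi fun _ => (PMF.uniformOfFintype Bool).toMeasure

instance : IsProbabilityMeasure coinMeasure := by unfold coinMeasure; infer_instance

open Classical in
/-- The number of positions below `l` outside `Z`. -/
def freeCount (Z : Set ℕ) (l : ℕ) : ℕ := ((Finset.range l).filter (· ∉ Z)).card

theorem coinMeasure_digitNum_eq_le (Z : Set ℕ) (l v : ℕ) :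
    coinMeasure {ω | digitNum Z ω l = v} ≤ 2⁻¹ ^ freeCount Z l := by
  classical
  rcases eq_empty_or_nonempty {ω | digitNum Z ω l = v} with h | ⟨ω₀, hω₀⟩
  · simp [h]
  · calc coinMeasure {ω | digitNum Z ω l = v}
        ≤ coinMeasure (Set.pi ((Finset.range l).filter (· ∉ Z)) fun i => {ω₀ i}) := by
          refine measure_mono fun ω hω i hi => ?_
          simp only [Finset.coe_filter, Finset.mem_range, mem_ofPred_eq] at hi
          exact eq_of_digitNum_eq Z (hω.trans hω₀.symm) i hi.1 hi.2
      _ = 2⁻¹ ^ freeCount Z l := by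
          rw [coinMeasure, Measure.infinitePi_pi _ (fun i _ => measurableSet_singleton _)]
          simp [freeCount]

theorem coinMeasure_digitReal_mem_Icc_le (Z : Set ℕ) (l : ℕ) {x δ : ℝ} (hx : 0 ≤ x)
    (hδ : δ ≤ (1 / 2) ^ l) :
    coinMeasure {ω | digitReal Z ω ∈ Icc (x - δ) (x + δ)} ≤ 4 * 2⁻¹ ^ freeCount Z l := by
  set a := ⌊2 ^ l * x⌋₊
  have hsub : {ω | digitReal Z ω ∈ Icc (x - δ) (x + δ)} ⊆
      ⋃ v ∈ Finset.Icc (a - 2) (a + 1), {ω | digitNum Z ω l = v} := by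
    intro ω hω
    have hpos : (0 : ℝ) < 2 ^ l := by positivity
    have h1 := digitReal_le Z ω l
    have h2 := le_digitReal Z ω l
    have hδ' : δ * 2 ^ l ≤ 1 := by
      calc δ * 2 ^ l ≤ (1 / 2) ^ l * 2 ^ l := by gcongr
        _ = 1 := by rw [← mul_pow]; norm_num
    rw [le_div_iff₀ hpos] at h1
    rw [div_le_iff₀ hpos] at h2
    have h3 := mul_le_mul_of_nonneg_right hω.1 hpos.le
    have h4 := mul_le_mul_of_nonneg_right hω.2 hpos.le
    have h5 : (a : ℝ) ≤ 2 ^ l * x := Nat.floor_le (by positivity)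
    have h6 : 2 ^ l * x < a + 1 := Nat.lt_floor_add_one _
    have h7 : (a : ℝ) ≤ digitNum Z ω l + 2 := by linarith
    have h8 : (digitNum Z ω l : ℝ) < a + 2 := by linarith
    have h7' : a ≤ digitNum Z ω l + 2 := by exact_mod_cast h7
    have h8' : digitNum Z ω l < a + 2 := by exact_mod_cast h8
    simp only [mem_iUnion, mem_ofPred_eq, exists_prop, Finset.mem_Icc]
    exact ⟨_, ⟨by omega, by omega⟩, rfl⟩
  calc _ ≤ _ := measure_mono hsub
    _ ≤ ∑ v ∈ Finset.Icc (a - 2) (a + 1), coinMeasure {ω | digitNum Z ω l = v} :=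
        measure_biUnion_finset_le _ _
    _ ≤ ∑ v ∈ Finset.Icc (a - 2) (a + 1), 2⁻¹ ^ freeCount Z l :=
        Finset.sum_le_sum fun v _ => coinMeasure_digitNum_eq_le Z l v
    _ ≤ 4 * 2⁻¹ ^ freeCount Z l := by
        rw [Finset.sum_const, nsmul_eq_mul]
        gcongr
        have : (Finset.Icc (a - 2) (a + 1)).card ≤ 4 := by rw [Nat.card_Icc]; omega
        exact_mod_cast this

/-- The point of the cube whose coordinates have binary digits `ω i`, with digits at positions in
`Z` replaced by zero. -/
def digitPoint (d : ℕ) (Z : Set ℕ) (ω : Fin d → ℕ → Bool) : Cube d :=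
  ⟨fun i => digitReal Z (ω i),
    fun i => (digitReal_mem_Icc Z (ω i)).1, fun i => (digitReal_mem_Icc Z (ω i)).2⟩

theorem measurable_digitPoint (d : ℕ) (Z : Set ℕ) : Measurable (digitPoint d Z) :=
  Measurable.subtype_mk <| measurable_pi_lambda _ fun i =>
    (measurable_digitReal Z).comp (measurable_pi_apply i)

/-- The law of a random point of the cube whose digits at positions in `Z` vanish and whose other
digits are independent and uniform. -/
def digitMeasure (d : ℕ) (Z : Set ℕ) : Measure (Cube d) :=
  (Measure.pi fun _ : Fin d => coinMeasure).map (digitPoint d Z)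

instance (d : ℕ) (Z : Set ℕ) : IsProbabilityMeasure (digitMeasure d Z) :=
  Measure.isProbabilityMeasure_map (measurable_digitPoint d Z).aemeasurable

theorem digitMeasure_le_of_ediam_le (d : ℕ) (Z : Set ℕ) (l : ℕ) {s : Set (Cube d)}
    (hs : ediam s ≤ ENNReal.ofReal ((1 / 2) ^ l)) :
    digitMeasure d Z s ≤ (4 * 2⁻¹ ^ freeCount Z l) ^ d := by
  rcases s.eq_empty_or_nonempty with rfl | ⟨x, hx⟩
  · simp
  have hball : s ⊆ closedBall x ((1 / 2) ^ l) := fun y hy => by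
    have := (edist_le_ediam_of_mem hy hx).trans hs
    rwa [edist_dist, ENNReal.ofReal_le_ofReal_iff (by positivity)] at this
  calc digitMeasure d Z s ≤ digitMeasure d Z (closedBall x ((1 / 2) ^ l)) := measure_mono hball
    _ = (Measure.pi fun _ : Fin d => coinMeasure)
        (digitPoint d Z ⁻¹' closedBall x ((1 / 2) ^ l)) :=
        Measure.map_apply (measurable_digitPoint d Z) measurableSet_closedBall
    _ ≤ (Measure.pi fun _ : Fin d => coinMeasure) (Set.pi univ fun i =>
        {ω | digitReal Z ω ∈ Icc (x.1 i - (1 / 2) ^ l) (x.1 i + (1 / 2) ^ l)}) := by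
        refine measure_mono fun ω hω i _ => ?_
        have h1 : dist (digitPoint d Z ω).1 x.1 ≤ (1 / 2) ^ l := hω
        have h2 := (dist_le_pi_dist (digitPoint d Z ω).1 x.1 i).trans h1
        rw [Real.dist_eq, abs_le] at h2
        exact ⟨by linarith [h2.1, show (digitPoint d Z ω).1 i = digitReal Z (ω i) from rfl],
          by linarith [h2.2, show (digitPoint d Z ω).1 i = digitReal Z (ω i) from rfl]⟩
    _ = ∏ i, coinMeasure
        {ω | digitReal Z ω ∈ Icc (x.1 i - (1 / 2) ^ l) (x.1 i + (1 / 2) ^ l)} :=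
        Measure.pi_pi _ _
    _ ≤ ∏ _i : Fin d, 4 * 2⁻¹ ^ freeCount Z l :=
        Finset.prod_le_prod' fun i _ => coinMeasure_digitReal_mem_Icc_le Z l (x.2.1 i) le_rfl
    _ = _ := by simp

theorem digitMeasure_absolutelyContinuous (d : ℕ) (Z : Set ℕ) {t : ℝ≥0} (ht : 0 < t) {K : ℝ}
    (hK : ∀ l : ℕ, t * l ≤ d * freeCount Z l + K) :
    digitMeasure d Z ≪ Measure.hausdorffMeasure (t : ℝ) := by
  have ht' : (0 : ℝ) < t := ht
  set C₀ : ℝ := 4 ^ d * 2 ^ K with hC₀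
  have hC₀pos : 0 < C₀ := by positivity
  have hstep : ∀ (l : ℕ) (s : Set (Cube d)), ediam s ≤ ENNReal.ofReal ((1 / 2) ^ l) →
      digitMeasure d Z s ≤ ENNReal.ofReal (C₀ * ((1 / 2) ^ l) ^ (t : ℝ)) := by
    intro l s hs
    refine (digitMeasure_le_of_ediam_le d Z l hs).trans ?_
    have h2 : (2⁻¹ : ℝ≥0∞) = ENNReal.ofReal (1 / 2) := by
      rw [one_div, ENNReal.ofReal_inv_of_pos two_pos, ENNReal.ofReal_ofNat]
    rw [h2, ← ENNReal.ofReal_pow (by norm_num), ← ENNReal.ofReal_ofNat 4,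
      ← ENNReal.ofReal_mul (by norm_num), ← ENNReal.ofReal_pow (by positivity)]
    apply ENNReal.ofReal_le_ofReal
    rw [mul_pow, hC₀, mul_assoc]
    gcongr
    have e1 : (((1 : ℝ) / 2) ^ freeCount Z l) ^ d = 2 ^ (-(d * freeCount Z l : ℝ)) := by
      rw [← pow_mul, one_div, inv_pow, Real.rpow_neg (by norm_num), ← Nat.cast_mul,
        Real.rpow_natCast, mul_comm]
    have e2 : (((1 : ℝ) / 2) ^ l) ^ (t : ℝ) = 2 ^ (-(t * l : ℝ)) := by
      rw [one_div, inv_pow, ← Real.rpow_natCast, ← Real.rpow_neg (by norm_num),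
        ← Real.rpow_mul (by norm_num)]
      congr 1; ring
    rw [e1, e2, ← Real.rpow_add (by norm_num)]
    apply Real.rpow_le_rpow_of_exponent_le (by norm_num)
    linarith [hK l]
  set C : ℝ := C₀ * 2 ^ (t : ℝ)
  have hCpos : 0 < C := by positivity
  have hbound : ∀ s : Set (Cube d), ediam s ≤ 1 →
      digitMeasure d Z s ≤ ENNReal.ofReal C * ediam s ^ (t : ℝ) := by
    intro s hs
    have hfin : ediam s ≠ ∞ := ne_top_of_le_ne_top ENNReal.one_ne_top hs
    rcases eq_or_ne (ediam s) 0 with h0 | h0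
    · have hlim : Tendsto (fun l : ℕ => ENNReal.ofReal (C₀ * ((1 / 2) ^ l) ^ (t : ℝ))) atTop
          (𝓝 0) := by
        have h1 : Tendsto (fun l : ℕ => ((1 : ℝ) / 2) ^ l) atTop (𝓝 0) :=
          tendsto_pow_atTop_nhds_zero_of_lt_one (by norm_num) (by norm_num)
        have h2 := (h1.rpow_const (p := (t : ℝ)) (Or.inr ht'.le)).const_mul C₀
        rw [Real.zero_rpow ht'.ne', mul_zero] at h2
        simpa using ENNReal.tendsto_ofReal h2
      exact (ge_of_tendsto' hlim fun l => hstep l s (by simp [h0])).trans zero_le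
    · have hδ := ENNReal.toReal_pos h0 hfin
      obtain ⟨l, hl1, hl2⟩ := exists_nat_pow_near_of_lt_one hδ
        (ENNReal.toReal_le_of_le_ofReal zero_le_one (by simpa using hs))
        (show (0 : ℝ) < 1 / 2 by norm_num) (by norm_num)
      rw [← ENNReal.ofReal_toReal hfin]
      refine (hstep l s ((ENNReal.le_ofReal_iff_toReal_le hfin (by positivity)).2 hl2)).trans ?_
      rw [ENNReal.ofReal_rpow_of_nonneg hδ.le ht'.le, ← ENNReal.ofReal_mul hCpos.le]
      apply ENNReal.ofReal_le_ofReal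
      calc C₀ * ((1 / 2) ^ l) ^ (t : ℝ) = C * ((1 / 2) ^ (l + 1)) ^ (t : ℝ) := by
            rw [show C = C₀ * 2 ^ (t : ℝ) from rfl, mul_assoc C₀,
              ← Real.mul_rpow (by norm_num) (by positivity)]
            congr 2
            rw [pow_succ]; ring
        _ ≤ C * (ediam s).toReal ^ (t : ℝ) := by gcongr
  have hle : (ENNReal.ofReal C)⁻¹ • digitMeasure d Z ≤ Measure.hausdorffMeasure (t : ℝ) := by
    refine Measure.le_hausdorffMeasure _ _ 1 one_pos fun s hs => ?_
    rw [Measure.smul_apply, smul_eq_mul, ← ENNReal.div_eq_inv_mul]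
    exact ENNReal.div_le_of_le_mul' (hbound s hs)
  refine Measure.AbsolutelyContinuous.mk fun s _ hs => ?_
  have h0 := le_antisymm ((hle s).trans hs.le) zero_le
  rw [Measure.smul_apply, smul_eq_mul, mul_eq_zero] at h0
  exact h0.resolve_left (by simp)

/-- The (very small) radius of the balls charged at level `j`. -/
def chargeRadius (j : ℕ) : ℝ := (1 / 2) ^ (j * j + 1)

theorem chargeRadius_pos (j : ℕ) : 0 < chargeRadius j := by unfold chargeRadius; positivity

theorem two_mul_chargeRadius (j : ℕ) : 2 * chargeRadius j = (1 / 2) ^ (j * j) := by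
  rw [chargeRadius, pow_succ]; ring

theorem two_mul_chargeRadius_le (j : ℕ) : 2 * chargeRadius j ≤ 1 / 2 ^ j := by
  rw [two_mul_chargeRadius, ← one_div_pow]
  exact pow_le_pow_of_le_one (by norm_num) (by norm_num) (Nat.le_mul_self j)

theorem natCast_add_one_div_two_pow_le {j : ℕ} (k : Fin (2 ^ j)) : ((k : ℝ) + 1) / 2 ^ j ≤ 1 := by
  rw [div_le_one (by positivity)]
  exact_mod_cast k.2

/-- The point of the dyadic cube of index `k` around which mass is put at level `j`. -/
def chargePoint (d j : ℕ) (k : Fin d → Fin (2 ^ j)) : Cube d :=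
  ⟨fun i => (k i : ℝ) / 2 ^ j + chargeRadius j,
    fun i => by
      have := chargeRadius_pos j
      simp only [Pi.zero_apply]
      positivity,
    fun i => by
      have h1 := natCast_add_one_div_two_pow_le (k i)
      have h2 := two_mul_chargeRadius_le j
      have h3 := chargeRadius_pos j
      rw [add_div] at h1
      simp only [Pi.one_apply]
      linarith⟩

theorem ball_chargePoint_subset (d j : ℕ) (k : Fin d → Fin (2 ^ j)) :
    ball (chargePoint d j k) (chargeRadius j) ⊆ dyadicCube d j k := by
  intro x hx i
  have h1 : dist x.1 (chargePoint d j k).1 < chargeRadius j := hx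
  have h2 := (dist_le_pi_dist x.1 (chargePoint d j k).1 i).trans_lt h1
  have h3 : (chargePoint d j k).1 i = (k i : ℝ) / 2 ^ j + chargeRadius j := rfl
  rw [h3, Real.dist_eq, abs_lt] at h2
  have h4 := two_mul_chargeRadius_le j
  rw [add_div]
  exact ⟨by linarith [h2.1], by linarith [h2.2]⟩

/-- At level `j`, the measure `μ` gives a substantial mass to a tiny ball inside every dyadic
cube, and a very large mass to one of these balls. -/
def ChargesLevel {d : ℕ} (μ : Measure (Cube d)) (j : ℕ) : Prop :=
  (∀ k, ENNReal.ofReal ((1 / 2) ^ (d * j) / j) < μ (ball (chargePoint d j k) (chargeRadius j))) ∧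
    ∃ k, ENNReal.ofReal (1 / j) < μ (ball (chargePoint d j k) (chargeRadius j))

/-- The set of probability measures charging infinitely many levels. -/
def typicalSet (d : ℕ) : Set (ProbabilityMeasure (Cube d)) :=
  ⋂ N : ℕ, ⋃ j ≥ N, {μ | ChargesLevel (μ : Measure (Cube d)) j}

theorem isOpen_setOf_lt_measure {X : Type*} [TopologicalSpace X] [MeasurableSpace X]
    [HasOuterApproxClosed X] [OpensMeasurableSpace X] (c : ℝ≥0∞) {G : Set X} (hG : IsOpen G) :
    IsOpen {μ : ProbabilityMeasure X | c < (μ : Measure X) G} := by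
  refine isOpen_iff_mem_nhds.2 fun μ hμ => ?_
  exact eventually_lt_of_lt_liminf (lt_of_lt_of_le hμ
    (ProbabilityMeasure.le_liminf_measure_open_of_tendsto tendsto_id hG))

theorem isOpen_setOf_chargesLevel (d j : ℕ) :
    IsOpen {μ : ProbabilityMeasure (Cube d) | ChargesLevel (μ : Measure (Cube d)) j} := by
  simp only [ChargesLevel, ofPred_and, ofPred_forall, ofPred_exists]
  exact (isOpen_iInter_of_finite fun k => isOpen_setOf_lt_measure _ isOpen_ball).inter
    (isOpen_iUnion fun k => isOpen_setOf_lt_measure _ isOpen_ball)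

theorem isGδ_typicalSet (d : ℕ) : IsGδ (typicalSet d) :=
  .iInter_of_isOpen fun _ => isOpen_iUnion fun j => isOpen_iUnion fun _ =>
    isOpen_setOf_chargesLevel d j

/-- The mixture of the uniform measure on the points `chargePoint d j k` and of a Dirac mass. -/
def chargeMeasure (d j : ℕ) : Measure (Cube d) :=
  (PMF.uniformOfFintype (Fin d → Fin (2 ^ j))).toMeasure.map (chargePoint d j) +
    Measure.dirac (chargePoint d j 0)

theorem chargeMeasure_univ (d j : ℕ) : chargeMeasure d j univ = 2 := by
  rw [chargeMeasure, Measure.add_apply, Measure.map_apply (measurable_of_countable _) .univ]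
  simp [one_add_one_eq_two]

theorem le_chargeMeasure_ball (d j : ℕ) (k : Fin d → Fin (2 ^ j)) {r : ℝ} (hr : 0 < r) :
    ENNReal.ofReal ((1 / 2) ^ (d * j)) ≤ chargeMeasure d j (ball (chargePoint d j k) r) := by
  rw [chargeMeasure, Measure.add_apply,
    Measure.map_apply (measurable_of_countable _) measurableSet_ball]
  refine le_add_right (le_trans ?_ (measure_mono (s := {k}) (by simpa using hr)))
  rw [PMF.toMeasure_apply_singleton _ _ (measurableSet_singleton _)]
  simp only [PMF.uniformOfFintype_apply, Fintype.card_pi, Fintype.card_fin, Finset.prod_const,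
    Finset.card_univ]
  rw [one_div, inv_pow, ENNReal.ofReal_inv_of_pos (by positivity), mul_comm d j, pow_mul]
  simp [ENNReal.ofReal_pow]

theorem one_le_chargeMeasure_ball (d j : ℕ) {r : ℝ} (hr : 0 < r) :
    1 ≤ chargeMeasure d j (ball (chargePoint d j 0) r) := by
  rw [chargeMeasure, Measure.add_apply]
  refine le_add_left ?_
  rw [Measure.dirac_apply_of_mem (mem_ball_self hr)]

/-- A probability measure charging the levels `4 ^ m`. -/
def chargeSeries (d : ℕ) : Measure (Cube d) :=
  Measure.sum fun m : ℕ => (2⁻¹ : ℝ≥0∞) ^ (m + 2) • chargeMeasure d (4 ^ m)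

instance (d : ℕ) : IsProbabilityMeasure (chargeSeries d) := by
  constructor
  rw [chargeSeries, Measure.sum_apply _ .univ]
  simp only [Measure.smul_apply, chargeMeasure_univ, smul_eq_mul, pow_succ, mul_assoc]
  rw [ENNReal.tsum_mul_right, ENNReal.inv_mul_cancel two_ne_zero ENNReal.ofNat_ne_top,
    ENNReal.tsum_geometric, ENNReal.one_sub_inv_two, inv_inv, mul_one,
    ENNReal.mul_inv_cancel two_ne_zero ENNReal.ofNat_ne_top]

theorem le_chargeSeries (d m : ℕ) (s : Set (Cube d)) :
    2⁻¹ ^ (m + 2) * chargeMeasure d (4 ^ m) s ≤ chargeSeries d s := by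
  have := Measure.le_sum (fun m : ℕ => (2⁻¹ : ℝ≥0∞) ^ (m + 2) • chargeMeasure d (4 ^ m)) m s
  simpa [chargeSeries] using this

/-- The mixture of `ν` and `chargeSeries d` with weights `1 - 1 / (n + 1)` and `1 / (n + 1)`. -/
def chargeMix {d : ℕ} (ν : ProbabilityMeasure (Cube d)) (n : ℕ) : ProbabilityMeasure (Cube d) :=
  ⟨(1 - ((n : ℝ≥0∞) + 1)⁻¹) • (ν : Measure (Cube d)) + ((n : ℝ≥0∞) + 1)⁻¹ • chargeSeries d, by
    constructor
    simp only [Measure.add_apply, Measure.smul_apply, measure_univ, smul_eq_mul, mul_one]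
    exact tsub_add_cancel_of_le (by simp)⟩

theorem tendsto_chargeMix {d : ℕ} (ν : ProbabilityMeasure (Cube d)) :
    Tendsto (chargeMix ν) atTop (𝓝 ν) := by
  refine tendsto_of_forall_isOpen_le_liminf' fun G _ => ?_
  have h0 : Tendsto (fun n : ℕ => ((n : ℝ≥0∞) + 1)⁻¹) atTop (𝓝 0) := by
    have := (tendsto_add_atTop_iff_nat 1).2 ENNReal.tendsto_inv_nat_nhds_zero
    simpa using this
  have h1 : Tendsto (fun n : ℕ => (1 - ((n : ℝ≥0∞) + 1)⁻¹) * (ν : Measure (Cube d)) G) atTop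
      (𝓝 ((1 - 0) * (ν : Measure (Cube d)) G)) :=
    ENNReal.Tendsto.mul_const (ENNReal.Tendsto.sub tendsto_const_nhds h0 (by simp)) (by simp)
  rw [tsub_zero, one_mul] at h1
  rw [← h1.liminf_eq]
  refine liminf_le_liminf (Eventually.of_forall fun n => ?_)
  simp [chargeMix]

theorem lt_chargeMix_of_le {d : ℕ} (ν : ProbabilityMeasure (Cube d)) {n m : ℕ}
    (hm : 4 * (n + 1) ≤ m) {c : ℝ} (hc : 0 < c) {s : Set (Cube d)}
    (hs : ENNReal.ofReal c ≤ chargeMeasure d (4 ^ m) s) :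
    ENNReal.ofReal (c / (4 ^ m : ℕ)) < (chargeMix ν n : Measure (Cube d)) s := by
  calc ENNReal.ofReal (c / (4 ^ m : ℕ))
      < ENNReal.ofReal (((n : ℝ) + 1)⁻¹ * ((2⁻¹) ^ (m + 2) * c)) := by
        rw [ENNReal.ofReal_lt_ofReal_iff (by positivity)]
        have h1 : ((n : ℝ) + 1) * 4 < 2 ^ m := by
          have : m < 2 ^ m := Nat.lt_two_pow_self
          exact_mod_cast (by omega : (n + 1) * 4 < 2 ^ m)
        have e : ((n : ℝ) + 1)⁻¹ * ((2⁻¹) ^ (m + 2) * c) = c / (((n : ℝ) + 1) * 2 ^ (m + 2)) := by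
          rw [inv_pow]; field_simp
        rw [e]
        apply div_lt_div_of_pos_left hc (by positivity)
        push_cast
        rw [show (4 : ℝ) ^ m = 2 ^ m * 2 ^ m by rw [← mul_pow]; norm_num, pow_add]
        nlinarith [show (0 : ℝ) < 2 ^ m by positivity]
    _ = ((n : ℝ≥0∞) + 1)⁻¹ * (2⁻¹ ^ (m + 2) * ENNReal.ofReal c) := by
        rw [ENNReal.ofReal_mul (by positivity), ENNReal.ofReal_mul (by positivity),
          ENNReal.ofReal_pow (by norm_num), ENNReal.ofReal_inv_of_pos (by positivity),
          ENNReal.ofReal_inv_of_pos (by positivity), ENNReal.ofReal_add (by positivity) one_pos.le]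
        simp
    _ ≤ ((n : ℝ≥0∞) + 1)⁻¹ * chargeSeries d s := by
        gcongr
        exact le_trans (by gcongr) (le_chargeSeries d m s)
    _ ≤ _ := by simp [chargeMix]

theorem chargeMix_mem_typicalSet {d : ℕ} (ν : ProbabilityMeasure (Cube d)) (n : ℕ) :
    chargeMix ν n ∈ typicalSet d := by
  refine mem_iInter.2 fun N => mem_iUnion₂.2 ⟨4 ^ (4 * (n + 1) + N), ?_, ?_, 0, ?_⟩
  · have : 4 * (n + 1) + N < 4 ^ (4 * (n + 1) + N) := Nat.lt_pow_self (by norm_num)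
    change N ≤ _
    omega
  · exact fun k => lt_chargeMix_of_le ν (by omega) (by positivity)
      (le_chargeMeasure_ball d _ k (chargeRadius_pos _))
  · exact lt_chargeMix_of_le ν (by omega) one_pos
      (by simpa using one_le_chargeMeasure_ball d _ (chargeRadius_pos _))

theorem dense_typicalSet (d : ℕ) : Dense (typicalSet d) := fun ν =>
  mem_closure_of_tendsto (tendsto_chargeMix ν)
    (Eventually.of_forall fun n => chargeMix_mem_typicalSet ν n)

theorem frequently_chargesLevel_of_mem_typicalSet {d : ℕ} {μ : ProbabilityMeasure (Cube d)}
    (hμ : μ ∈ typicalSet d) : ∃ᶠ j in atTop, ChargesLevel (μ : Measure (Cube d)) j := by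
  refine frequently_atTop.2 fun N => ?_
  obtain ⟨j, hj, hc⟩ := mem_iUnion₂.1 (mem_iInter.1 hμ N)
  exact ⟨j, hj, hc⟩

theorem measurableSet_dyadicCube (d j : ℕ) (k : Fin d → Fin (2 ^ j)) :
    MeasurableSet (dyadicCube d j k) := by
  have hm : ∀ i, Measurable fun x : Cube d => (x : Fin d → ℝ) i := fun i =>
    (measurable_pi_apply i).comp measurable_subtype_coe
  simp only [dyadicCube, ofPred_forall, ofPred_and]
  exact .iInter fun i => (measurableSet_le measurable_const (hm i)).inter
    (measurableSet_lt (hm i) measurable_const)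

theorem pairwise_disjoint_dyadicCube (d j : ℕ) :
    Pairwise (Function.onFun Disjoint (dyadicCube d j)) := by
  intro k k' hne
  refine Set.disjoint_left.2 fun x hx hx' => hne (funext fun i => Fin.ext ?_)
  have h := hx i
  have h' := hx' i
  have hpos : (0 : ℝ) < 2 ^ j := by positivity
  rw [div_le_iff₀ hpos, lt_div_iff₀ hpos] at h h'
  have h1 : (k i : ℝ) < k' i + 1 := by linarith [h.1, h'.2]
  have h2 : (k' i : ℝ) < k i + 1 := by linarith [h'.1, h.2]
  have h1' : (k i : ℕ) < k' i + 1 := by exact_mod_cast h1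
  have h2' : (k' i : ℕ) < k i + 1 := by exact_mod_cast h2
  omega

theorem sum_measure_dyadicCube_le_one {d : ℕ} (μ : Measure (Cube d)) [IsProbabilityMeasure μ]
    (j : ℕ) (t : Finset (Fin d → Fin (2 ^ j))) :
    ∑ k ∈ t, (μ (dyadicCube d j k)).toReal ≤ 1 := by
  rw [← ENNReal.toReal_sum fun _ _ => measure_ne_top _ _]
  refine ENNReal.toReal_le_of_le_ofReal zero_le_one ?_
  rw [← measure_biUnion_finset (fun a _ b _ hab => pairwise_disjoint_dyadicCube d j hab)
    fun k _ => measurableSet_dyadicCube d j k, ENNReal.ofReal_one]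
  exact prob_le_one

theorem lqSpectrum_one_nonneg {d : ℕ} (μ : Measure (Cube d)) [IsProbabilityMeasure μ] :
    0 ≤ lqSpectrum μ 1 := by
  refine le_liminf_of_le (by isBoundedDefault) (Eventually.of_forall fun j => ?_)
  have h1 : dyadicSum μ 1 j ≤ 1 := by
    simpa only [dyadicSum, Real.rpow_one] using sum_measure_dyadicCube_le_one μ j _
  have h0 : 0 ≤ dyadicSum μ 1 j := Finset.sum_nonneg fun _ _ => by positivity
  have h2 : Real.logb 2 (dyadicSum μ 1 j) ≤ 0 :=
    div_nonpos_of_nonpos_of_nonneg (Real.log_nonpos h0 h1) (Real.log_nonneg one_le_two)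
  have h3 : (0 : ℝ) ≤ 1 / j := by positivity
  exact_mod_cast (by nlinarith : 0 ≤ -(1 / (j : ℝ)) * Real.logb 2 (dyadicSum μ 1 j))

theorem lqSpectrum_le_of_frequently_le {d : ℕ} {μ : Measure (Cube d)} {q a b : ℝ}
    (h : ∃ᶠ j : ℕ in atTop, (2 : ℝ) ^ (a * j) * (1 / (j : ℝ)) ^ b ≤ dyadicSum μ q j) :
    lqSpectrum μ q ≤ ((-a : ℝ) : EReal) := by
  refine EReal.le_of_forall_lt_iff_le.1 fun z hz => ?_
  have hz' : -a < z := EReal.coe_lt_coe_iff.1 hz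
  have hlim : Tendsto (fun j : ℕ => -a + b * (Real.log j / j / Real.log 2)) atTop
      (𝓝 (-a + b * (0 / Real.log 2))) := by
    have h1 : Tendsto (fun x : ℝ => Real.log x / x) atTop (𝓝 0) := by
      simpa using Real.isLittleO_log_id_atTop.tendsto_div_nhds_zero
    exact (((h1.comp tendsto_natCast_atTop_atTop).div_const _).const_mul b).const_add (-a)
  rw [zero_div, mul_zero, add_zero] at hlim
  refine liminf_le_of_frequently_le' (((h.and_eventually
    (hlim.eventually_lt_const hz')).and_eventually (eventually_ge_atTop 1)).mono ?_)
  rintro j ⟨⟨hsum, hj⟩, hj1⟩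
  have hjpos : (0 : ℝ) < j := by exact_mod_cast hj1
  refine EReal.coe_le_coe_iff.2 (le_trans ?_ hj.le)
  have hlog2 : 0 < Real.log 2 := Real.log_pos one_lt_two
  have hlogb := Real.logb_le_logb_of_le one_lt_two (by positivity) hsum
  have e : Real.logb 2 ((2 : ℝ) ^ (a * j) * (1 / (j : ℝ)) ^ b) =
      a * j - b * (Real.log j / Real.log 2) := by
    rw [Real.logb, Real.log_mul (by positivity) (by positivity), Real.log_rpow two_pos,
      Real.log_rpow (by positivity), one_div, Real.log_inv]
    field_simp
    ring
  rw [e] at hlogb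
  calc -(1 / (j : ℝ)) * Real.logb 2 (dyadicSum μ q j)
      ≤ -(1 / (j : ℝ)) * (a * j - b * (Real.log j / Real.log 2)) := by
        have : (0 : ℝ) ≤ 1 / j := by positivity
        nlinarith
    _ = _ := by field_simp; ring

section ChargesLevel

variable {d : ℕ} {μ : Measure (Cube d)} {j : ℕ}

theorem ChargesLevel.lt_toReal [IsFiniteMeasure μ] (h : ChargesLevel μ j)
    (k : Fin d → Fin (2 ^ j)) :
    (1 / 2) ^ (d * j) / j < (μ (dyadicCube d j k)).toReal :=
  (ENNReal.ofReal_lt_iff_lt_toReal (by positivity) (measure_ne_top _ _)).1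
    ((h.1 k).trans_le (measure_mono (ball_chargePoint_subset d j k)))

theorem ChargesLevel.exists_lt_toReal [IsFiniteMeasure μ] (h : ChargesLevel μ j) :
    ∃ k, 1 / (j : ℝ) < (μ (dyadicCube d j k)).toReal := by
  obtain ⟨k, hk⟩ := h.2
  exact ⟨k, (ENNReal.ofReal_lt_iff_lt_toReal (by positivity) (measure_ne_top _ _)).1
    (hk.trans_le (measure_mono (ball_chargePoint_subset d j k)))⟩

theorem ChargesLevel.toReal_pos [IsFiniteMeasure μ] (h : ChargesLevel μ j)
    (k : Fin d → Fin (2 ^ j)) : 0 < (μ (dyadicCube d j k)).toReal :=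
  lt_of_le_of_lt (by positivity) (h.lt_toReal k)

theorem ChargesLevel.dyadicSum_eq [IsFiniteMeasure μ] (h : ChargesLevel μ j) (q : ℝ) :
    dyadicSum μ q j = ∑ k, (μ (dyadicCube d j k)).toReal ^ q := by
  rw [dyadicSum, Finset.filter_true_of_mem]
  intro k _ h0
  simpa [h0] using h.toReal_pos k

theorem card_dyadic_index (d j : ℕ) :
    ((Finset.univ : Finset (Fin d → Fin (2 ^ j))).card : ℝ) = 2 ^ ((d : ℝ) * j) := by
  rw [← Nat.cast_mul, Real.rpow_natCast]
  simp [mul_comm d j, pow_mul]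

theorem ChargesLevel.le_dyadicSum_of_nonneg [IsFiniteMeasure μ] (h : ChargesLevel μ j)
    {q : ℝ} (hq : 0 ≤ q) :
    (2 : ℝ) ^ (d * (1 - q) * j) * (1 / (j : ℝ)) ^ q ≤ dyadicSum μ q j := by
  rw [h.dyadicSum_eq]
  calc (2 : ℝ) ^ (d * (1 - q) * j) * (1 / (j : ℝ)) ^ q
      = ∑ _k : Fin d → Fin (2 ^ j), ((1 / 2 : ℝ) ^ (d * j) / j) ^ q := by
        have e : (1 / 2 : ℝ) ^ (d * j) / j = 2 ^ (-((d : ℝ) * j)) * (1 / j) := by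
          rw [Real.rpow_neg (by norm_num), ← Nat.cast_mul, Real.rpow_natCast, one_div_pow]
          ring
        rw [Finset.sum_const, nsmul_eq_mul, card_dyadic_index, e,
          Real.mul_rpow (by positivity) (by positivity), ← mul_assoc,
          ← Real.rpow_mul (by norm_num), ← Real.rpow_add (by norm_num)]
        congr 2
        ring
    _ ≤ _ := Finset.sum_le_sum fun k _ => by
        gcongr
        exact (h.lt_toReal k).le

theorem ChargesLevel.one_div_rpow_le_dyadicSum [IsFiniteMeasure μ] (h : ChargesLevel μ j)
    {q : ℝ} (hq : 0 ≤ q) : (1 / (j : ℝ)) ^ q ≤ dyadicSum μ q j := by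
  rw [h.dyadicSum_eq]
  obtain ⟨k, hk⟩ := h.exists_lt_toReal
  calc (1 / (j : ℝ)) ^ q ≤ (μ (dyadicCube d j k)).toReal ^ q := by gcongr
    _ ≤ _ := Finset.single_le_sum (f := fun k => (μ (dyadicCube d j k)).toReal ^ q)
      (fun _ _ => by positivity) (Finset.mem_univ k)

theorem one_add_mul_sub_one_le_rpow {x q : ℝ} (hx : 0 < x) (hq : q ≤ 0) :
    1 + q * (x - 1) ≤ x ^ q := by
  rw [Real.rpow_def_of_pos hx]
  nlinarith [Real.add_one_le_exp (Real.log x * q), Real.log_le_sub_one_of_pos hx]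

theorem ChargesLevel.le_dyadicSum_of_nonpos [IsProbabilityMeasure μ] (h : ChargesLevel μ j)
    {q : ℝ} (hq : q ≤ 0) : (2 : ℝ) ^ (d * (1 - q) * j) ≤ dyadicSum μ q j := by
  rw [h.dyadicSum_eq]
  set N : ℝ := 2 ^ ((d : ℝ) * j) with hN
  have hNpos : 0 < N := by positivity
  calc (2 : ℝ) ^ (d * (1 - q) * j) = N ^ (-q) * N := by
        rw [← Real.rpow_add_one hNpos.ne', hN, ← Real.rpow_mul (by norm_num)]
        congr 1; ring
    _ ≤ N ^ (-q) * ∑ k : Fin d → Fin (2 ^ j),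
        (1 + q * (N * (μ (dyadicCube d j k)).toReal - 1)) := by
        gcongr
        rw [Finset.sum_add_distrib, ← Finset.mul_sum, Finset.sum_sub_distrib, ← Finset.mul_sum,
          Finset.sum_const, nsmul_eq_mul, card_dyadic_index, mul_one]
        have h1 := sum_measure_dyadicCube_le_one μ j Finset.univ
        have h2 : N * ∑ k, (μ (dyadicCube d j k)).toReal - N ≤ 0 := by nlinarith
        nlinarith
    _ ≤ N ^ (-q) * ∑ k : Fin d → Fin (2 ^ j), (N * (μ (dyadicCube d j k)).toReal) ^ q := by
        gcongr with k
        exact one_add_mul_sub_one_le_rpow (mul_pos hNpos (h.toReal_pos k)) hq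
    _ = _ := by
        rw [Finset.mul_sum]
        refine Finset.sum_congr rfl fun k _ => ?_
        rw [Real.mul_rpow hNpos.le (h.toReal_pos k).le, ← mul_assoc, ← Real.rpow_add hNpos]
        simp

end ChargesLevel

theorem lqSpectrum_le_of_frequently_chargesLevel {d : ℕ} {μ : Measure (Cube d)}
    [IsProbabilityMeasure μ]
    (hμ : ∃ᶠ j in atTop, ChargesLevel μ j) (q : ℝ) :
    lqSpectrum μ q ≤ ((-(d * (1 - q)) : ℝ) : EReal) := by
  rcases le_total 0 q with hq | hq
  · exact lqSpectrum_le_of_frequently_le (hμ.mono fun j hj => hj.le_dyadicSum_of_nonneg hq)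
  · exact lqSpectrum_le_of_frequently_le (b := 0)
      (hμ.mono fun j hj => by simpa using hj.le_dyadicSum_of_nonpos hq)

theorem lqSpectrum_nonpos_of_frequently_chargesLevel {d : ℕ} {μ : Measure (Cube d)}
    [IsProbabilityMeasure μ]
    (hμ : ∃ᶠ j in atTop, ChargesLevel μ j) {q : ℝ} (hq : 0 ≤ q) : lqSpectrum μ q ≤ 0 := by
  have := lqSpectrum_le_of_frequently_le (a := 0) (b := q)
    (hμ.mono fun j hj => by simpa using hj.one_div_rpow_le_dyadicSum hq)
  simpa using this

/-- For a typical measure, the Legendre transform of the `L^q`-spectrum is the identity on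
`[0, d]`. -/
theorem iInf_sub_lqSpectrum {d : ℕ} {μ : Measure (Cube d)} [IsProbabilityMeasure μ]
    (hμ : ∃ᶠ j in atTop, ChargesLevel μ j) {h : ℝ} (hh : h ∈ Icc (0 : ℝ) d) :
    ⨅ q : ℝ, ((q * h : ℝ) : EReal) - lqSpectrum μ q = h := by
  refine le_antisymm (iInf_le_of_le 1 ?_) (le_iInf fun q => ?_)
  · calc ((1 * h : ℝ) : EReal) - lqSpectrum μ 1 ≤ ((1 * h : ℝ) : EReal) - 0 :=
        EReal.sub_le_sub le_rfl (lqSpectrum_one_nonneg μ)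
      _ = h := by simp
  · have hτ : lqSpectrum μ q ≤ (((q - 1) * h : ℝ) : EReal) := by
      rcases le_total q 1 with hq | hq
      · refine (lqSpectrum_le_of_frequently_chargesLevel hμ q).trans (EReal.coe_le_coe_iff.2 ?_)
        nlinarith [hh.2]
      · refine (lqSpectrum_nonpos_of_frequently_chargesLevel hμ (zero_le_one.trans hq)).trans ?_
        exact_mod_cast mul_nonneg (sub_nonneg.2 hq) hh.1
    calc (h : EReal) = ((q * h : ℝ) : EReal) - (((q - 1) * h : ℝ) : EReal) := by
          rw [← EReal.coe_sub]; congr 1; ring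
      _ ≤ _ := EReal.sub_le_sub le_rfl hτ

theorem exists_sparse_sequence {p : ℕ → Prop} (hp : ∃ᶠ j in atTop, p j) {e : ℕ → ℕ}
    (he : ∀ j, j ≤ e j) :
    ∃ J : ℕ → ℕ, StrictMono J ∧ (∀ n, p (J n)) ∧ ∀ n, (n + 1) * (e (J n) + 1) ≤ J (n + 1) := by
  choose g hg hpg using frequently_atTop.1 hp
  let J : ℕ → ℕ := fun n => Nat.rec (g 0) (fun n j => g ((n + 1) * (e j + 1))) n
  have hJ : ∀ n, (n + 1) * (e (J n) + 1) ≤ J (n + 1) := fun n => hg _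
  refine ⟨J, strictMono_nat_of_lt_succ fun n => ?_, fun n => ?_, hJ⟩
  · calc J n < e (J n) + 1 := Nat.lt_succ_of_le (he _)
      _ ≤ (n + 1) * (e (J n) + 1) := Nat.le_mul_of_pos_left _ n.succ_pos
      _ ≤ _ := hJ n
  · cases n <;> exact hpg _

theorem le_freeCount_add {e J : ℕ → ℕ} (hJ : StrictMono J) {n l : ℕ}
    (he : J (n + 1) ≤ e (J (n + 1)))
    (hmono : Monotone fun n => e (J n)) (hl : J (n + 1) ≤ l) (hl' : l < J (n + 2)) :
    l + J (n + 1) ≤ freeCount (⋃ n, Ico (J n) (e (J n) + 1)) l + (e (J n) + 1) +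
      min l (e (J (n + 1)) + 1) := by
  classical
  set Z : Set ℕ := ⋃ n, Ico (J n) (e (J n) + 1)
  have hsub : (Finset.range l).filter (· ∈ Z) ⊆
      Finset.range (e (J n) + 1) ∪ Finset.Ico (J (n + 1)) (min l (e (J (n + 1)) + 1)) := by
    intro i hi
    obtain ⟨hil, hiZ⟩ := Finset.mem_filter.1 hi
    rw [Finset.mem_range] at hil
    obtain ⟨m, hm1, hm2⟩ := mem_iUnion.1 hiZ
    rw [Finset.mem_union, Finset.mem_range, Finset.mem_Ico]
    rcases lt_trichotomy m (n + 1) with h | rfl | h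
    · have : e (J m) ≤ e (J n) := hmono (Nat.lt_succ_iff.1 h)
      left; omega
    · right; exact ⟨hm1, lt_min hil hm2⟩
    · have : J (n + 2) ≤ J m := hJ.monotone h
      omega
  have hcard := (Finset.card_le_card hsub).trans (Finset.card_union_le _ _)
  rw [Finset.card_range, Nat.card_Ico] at hcard
  have htot := Finset.card_filter_add_card_filter_not (s := Finset.range l) (· ∈ Z)
  rw [Finset.card_range] at htot
  have hfree : freeCount Z l = ((Finset.range l).filter (· ∉ Z)).card := by
    unfold freeCount; congr
  rw [hfree]
  omega

/-- The end of the block of vanishing digits starting at position `j`. -/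
def blockEnd (d : ℕ) (h : ℝ) (j : ℕ) : ℕ := ⌈(d : ℝ) * j / h⌉₊

theorem le_blockEnd {d : ℕ} {h : ℝ} (h0 : 0 < h) (hd : h ≤ d) (j : ℕ) : j ≤ blockEnd d h j := by
  have h1 : (j : ℝ) ≤ d * j / h := by
    rw [le_div_iff₀ h0, mul_comm]
    gcongr
  have h2 : (j : ℝ) ≤ (blockEnd d h j : ℝ) := h1.trans (Nat.le_ceil _)
  exact_mod_cast h2

theorem monotone_blockEnd (d : ℕ) {h : ℝ} (h0 : 0 < h) : Monotone (blockEnd d h) :=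
  fun _ _ hij => Nat.ceil_mono (by gcongr)

theorem exists_mul_le_freeCount_add {d : ℕ} {h : ℝ} (h0 : 0 < h) (hd : h ≤ d) {J : ℕ → ℕ}
    (hJ : StrictMono J) (hstep : ∀ n, (n + 1) * (blockEnd d h (J n) + 1) ≤ J (n + 1))
    {t : ℝ} (ht0 : 0 ≤ t) (ht : t < h) :
    ∃ K : ℝ, ∀ l : ℕ,
      t * l ≤ d * freeCount (⋃ n, Ico (J n) (blockEnd d h (J n) + 1)) l + K := by
  have hdpos : (0 : ℝ) < d := h0.trans_le hd
  obtain ⟨n₀, hn₀⟩ := exists_nat_gt (d / (h - t))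
  rw [div_lt_iff₀ (sub_pos.2 ht)] at hn₀
  refine ⟨2 * d + t * J (n₀ + 1), fun l => ?_⟩
  rcases lt_or_ge l (J (n₀ + 1)) with hl | hl
  · have h1 : (l : ℝ) ≤ J (n₀ + 1) := by exact_mod_cast hl.le
    have h2 := mul_le_mul_of_nonneg_left h1 ht0
    have h3 : (0 : ℝ) ≤ d * freeCount (⋃ n, Ico (J n) (blockEnd d h (J n) + 1)) l := by positivity
    linarith
  have hex : ∃ m, l < J m := ⟨l + 1, (Nat.lt_succ_self l).trans_le hJ.le_apply⟩
  obtain ⟨n, hn, hln, hln'⟩ : ∃ n ≥ n₀, J (n + 1) ≤ l ∧ l < J (n + 2) := by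
    have h1 := Nat.find_spec hex
    have h2 : n₀ + 1 < Nat.find hex := hJ.lt_iff_lt.1 (hl.trans_lt h1)
    refine ⟨Nat.find hex - 2, by omega, ?_, ?_⟩
    · exact not_lt.1 (Nat.find_min hex (m := Nat.find hex - 2 + 1) (by omega))
    · rwa [show Nat.find hex - 2 + 2 = Nat.find hex by omega]
  have key := le_freeCount_add hJ (le_blockEnd h0 hd _)
    ((monotone_blockEnd d h0).comp hJ.monotone) hln hln'
  set F := freeCount (⋃ n, Ico (J n) (blockEnd d h (J n) + 1)) l
  set M := min l (blockEnd d h (J (n + 1)) + 1)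
  have hM1 : (M : ℝ) ≤ l := by exact_mod_cast min_le_left _ _
  have hM2 : (M : ℝ) ≤ d * J (n + 1) / h + 2 := by
    have h1 : (M : ℝ) ≤ blockEnd d h (J (n + 1)) + 1 := by exact_mod_cast min_le_right _ _
    have h2 := Nat.ceil_lt_add_one (a := (d : ℝ) * J (n + 1) / h) (by positivity)
    rw [← blockEnd] at h2
    linarith
  have hM3 : h * (M - 2) ≤ d * J (n + 1) := by
    have := (le_div_iff₀ h0).1 (sub_le_iff_le_add.2 hM2)
    linarith
  have key' : (l : ℝ) + J (n + 1) ≤ F + (blockEnd d h (J n) + 1) + M := by exact_mod_cast key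
  have hB : ((n : ℝ) + 1) * (blockEnd d h (J n) + 1) ≤ l := by exact_mod_cast (hstep n).trans hln
  set B : ℝ := (blockEnd d h (J n) : ℝ) + 1
  have hBpos : 0 < B := by positivity
  have hnn : (n₀ : ℝ) ≤ n := by exact_mod_cast hn
  have hdB : d * B ≤ (h - t) * l := by
    have h1 : (d : ℝ) ≤ (h - t) * (n + 1) := by nlinarith
    calc d * B ≤ (h - t) * (n + 1) * B := by gcongr
      _ = (h - t) * ((n + 1) * B) := by ring
      _ ≤ _ := mul_le_mul_of_nonneg_left hB (sub_pos.2 ht).le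
  have h5 : h * (l - M) ≤ d * (l - M) := mul_le_mul_of_nonneg_right hd (by linarith)
  have h6 := mul_le_mul_of_nonneg_left key' hdpos.le
  have h7 : (0 : ℝ) ≤ t * J (n₀ + 1) := by positivity
  nlinarith

/-- The points of the cube at distance at most `2 ^ (-t)` above a dyadic point of level `j`. -/
def nearDyadic (d j t : ℕ) : Set (Cube d) :=
  {x | ∃ k : Fin d → Fin (2 ^ j), ∀ i, (k i : ℝ) / 2 ^ j ≤ (x : Fin d → ℝ) i ∧
    (x : Fin d → ℝ) i ≤ (k i : ℝ) / 2 ^ j + 1 / 2 ^ t}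

theorem measurableSet_nearDyadic (d j t : ℕ) : MeasurableSet (nearDyadic d j t) := by
  have hm : ∀ i, Measurable fun x : Cube d => (x : Fin d → ℝ) i := fun i =>
    (measurable_pi_apply i).comp measurable_subtype_coe
  simp only [nearDyadic, ofPred_exists, ofPred_forall, ofPred_and]
  exact .iUnion fun k => .iInter fun i => (measurableSet_le measurable_const (hm i)).inter
    (measurableSet_le (hm i) measurable_const)

theorem digitPoint_mem_nearDyadic (d : ℕ) {Z : Set ℕ} {j t : ℕ} (hjt : j ≤ t) (hZ : Ico j t ⊆ Z)
    (ω : Fin d → ℕ → Bool) : digitPoint d Z ω ∈ nearDyadic d j t :=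
  ⟨fun i => ⟨digitNum Z (ω i) j, digitNum_lt Z (ω i) j⟩, fun i =>
    ⟨le_digitReal Z (ω i) j, digitReal_le_of_Ico_subset Z (ω i) hjt hZ⟩⟩

theorem ball_chargePoint_subset_ball {d j e : ℕ} (he : e ≤ j * j) {x : Cube d}
    {k : Fin d → Fin (2 ^ j)} (hx : ∀ i, (k i : ℝ) / 2 ^ j ≤ (x : Fin d → ℝ) i ∧
      (x : Fin d → ℝ) i ≤ (k i : ℝ) / 2 ^ j + 1 / 2 ^ (e + 1)) :
    ball (chargePoint d j k) (chargeRadius j) ⊆ ball x ((1 / 2) ^ e) := by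
  intro y hy
  have h1 : dist y.1 (chargePoint d j k).1 < chargeRadius j := hy
  change dist y.1 x.1 < _
  refine (dist_pi_lt_iff (by positivity)).2 fun i => ?_
  have h2 := (dist_le_pi_dist y.1 (chargePoint d j k).1 i).trans_lt h1
  have h3 : (chargePoint d j k).1 i = (k i : ℝ) / 2 ^ j + chargeRadius j := rfl
  rw [h3, Real.dist_eq, abs_lt] at h2
  have h4 : 2 * chargeRadius j ≤ (1 / 2) ^ e := by
    rw [two_mul_chargeRadius]
    exact pow_le_pow_of_le_one (by norm_num) (by norm_num) he
  have h5 : (1 : ℝ) / 2 ^ (e + 1) ≤ (1 / 2) ^ e := by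
    rw [← one_div_pow]
    exact pow_le_pow_of_le_one (by norm_num) (by norm_num) (Nat.le_succ e)
  rw [Real.dist_eq, abs_lt]
  constructor <;> linarith [(hx i).1, (hx i).2]

theorem ChargesLevel.log_ball_div_log_le {d j : ℕ} {μ : Measure (Cube d)} (hμ : ChargesLevel μ j)
    {h : ℝ} (h0 : 0 < h) (hd : 1 ≤ d) (hj1 : 1 ≤ j) (hj : d / h ≤ j) {x : Cube d}
    (hx : x ∈ nearDyadic d j (blockEnd d h j + 1)) :
    ENNReal.log (μ (ball x ((1 / 2) ^ blockEnd d h j))) /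
      (Real.log ((1 / 2) ^ blockEnd d h j) : EReal) ≤
      ((h + h / (d * Real.log 2) * (Real.log j / j) : ℝ) : EReal) := by
  have hjpos : (0 : ℝ) < j := by exact_mod_cast hj1
  have hdpos : (0 : ℝ) < d := by exact_mod_cast hd
  have hlog2 : 0 < Real.log 2 := Real.log_pos one_lt_two
  have hlogj : 0 ≤ Real.log j := Real.log_natCast_nonneg j
  set e := blockEnd d h j with he
  have hej : e ≤ j * j := by
    refine Nat.ceil_le.2 ?_
    push_cast
    calc (d : ℝ) * j / h = d / h * j := by ring
      _ ≤ j * j := by gcongr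
  have hele : (d : ℝ) * j / h ≤ e := Nat.le_ceil _
  obtain ⟨k, hk⟩ := hx
  have hmass := (hμ.1 k).le.trans (measure_mono (ball_chargePoint_subset_ball hej hk))
  refine (log_measure_div_log_le (by positivity) (pow_le_one₀ (by norm_num) (by norm_num))
    (by positivity) hmass).trans (EReal.coe_le_coe_iff.2 ?_)
  have e1 : Real.log ((1 / 2) ^ (d * j) / j) / Real.log ((1 / 2) ^ e) =
      (d * j * Real.log 2 + Real.log j) / (e * Real.log 2) := by
    rw [Real.log_div (by positivity) (by positivity), Real.log_pow, Real.log_pow, one_div,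
      Real.log_inv]
    push_cast
    rw [← neg_div_neg_eq]
    congr 1 <;> ring
  rw [e1]
  calc (d * j * Real.log 2 + Real.log j) / (e * Real.log 2)
      ≤ (d * j * Real.log 2 + Real.log j) / (d * j / h * Real.log 2) := by gcongr
    _ = _ := by field_simp

theorem locDim_le_of_mem_nearDyadic {d : ℕ} (hd : 1 ≤ d) {μ : Measure (Cube d)} {h : ℝ}
    (h0 : 0 < h) (hhd : h ≤ d) {J : ℕ → ℕ} (hJ : StrictMono J) (hμ : ∀ n, ChargesLevel μ (J n))
    {x : Cube d} (hx : ∀ n, x ∈ nearDyadic d (J n) (blockEnd d h (J n) + 1)) :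
    locDim μ x ≤ (h : EReal) := by
  refine EReal.le_of_forall_lt_iff_le.1 fun z hz => liminf_le_of_frequently_le' ?_
  have hz' : h < z := EReal.coe_lt_coe_iff.1 hz
  have hJtop : Tendsto (fun n => (J n : ℝ)) atTop atTop :=
    tendsto_natCast_atTop_atTop.comp hJ.tendsto_atTop
  have hr : Tendsto (fun n => ((1 : ℝ) / 2) ^ blockEnd d h (J n)) atTop (𝓝[>] 0) := by
    refine tendsto_nhdsWithin_iff.2 ⟨?_, Eventually.of_forall fun n => by
      simp only [mem_Ioi]; positivity⟩
    exact (tendsto_pow_atTop_nhds_zero_of_lt_one (by norm_num) (by norm_num)).comp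
      (tendsto_atTop_mono (fun n => le_blockEnd h0 hhd (J n)) hJ.tendsto_atTop)
  have hlim : Tendsto (fun n => h + h / (d * Real.log 2) * (Real.log (J n) / J n)) atTop
      (𝓝 (h + h / (d * Real.log 2) * 0)) := by
    have h1 : Tendsto (fun x : ℝ => Real.log x / x) atTop (𝓝 0) := by
      simpa using Real.isLittleO_log_id_atTop.tendsto_div_nhds_zero
    exact ((h1.comp hJtop).const_mul _).const_add h
  rw [mul_zero, add_zero] at hlim
  refine hr.frequently (Eventually.frequently ?_)
  filter_upwards [hlim.eventually_lt_const hz', hJtop.eventually_ge_atTop (d / h),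
    hJ.tendsto_atTop.eventually_ge_atTop 1] with n hn1 hn2 hn3
  exact ((hμ n).log_ball_div_log_le h0 hd hn3 hn2 (hx n)).trans (EReal.coe_le_coe_iff.2 hn1.le)

/-- A measure vanishing on sets of Hausdorff dimension less than `h` does not charge the points of
local dimension less than `h`. -/
theorem measure_setOf_locDim_lt_eq_zero {d : ℕ} (μ m : Measure (Cube d)) [IsFiniteMeasure μ]
    {h : ℝ} (h0 : 0 < h)
    (hm : ∀ t : ℝ≥0, 0 < t → (t : ℝ) < h → m ≪ Measure.hausdorffMeasure (t : ℝ)) :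
    m {x | locDim μ x < (h : EReal)} = 0 := by
  have hsub : {x | locDim μ x < (h : EReal)} ⊆
      ⋃ q : {q : ℚ // (q : ℝ) < h}, {x | locDim μ x ≤ ((Real.toNNReal (q : ℚ) : ℝ) : EReal)} := by
    intro x hx
    obtain ⟨q, hq1, hq2⟩ := EReal.lt_iff_exists_rat_btwn.1 hx
    refine mem_iUnion.2 ⟨⟨q, EReal.coe_lt_coe_iff.1 hq2⟩, hq1.le.trans ?_⟩
    exact EReal.coe_le_coe_iff.2 (Real.le_coe_toNNReal _)
  refine measure_mono_null hsub (measure_iUnion_null fun ⟨q, hq⟩ => ?_)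
  have hq' : ((Real.toNNReal (q : ℝ) : ℝ≥0) : ℝ) < h := by
    rw [Real.coe_toNNReal']; exact max_lt hq h0
  obtain ⟨t, ht1, ht2⟩ := exists_between hq'
  lift t to ℝ≥0 using (NNReal.coe_nonneg _).trans ht1.le
  have ht1' : Real.toNNReal (q : ℝ) < t := NNReal.coe_lt_coe.1 ht1
  refine hm t (zero_le.trans_lt ht1') ht2 (hausdorffMeasure_of_dimH_lt ?_)
  exact (dimH_setOf_locDim_le μ _).trans_lt (ENNReal.coe_lt_coe.2 ht1')

theorem le_dimH_levelSet {d : ℕ} (hd : 1 ≤ d) {μ : Measure (Cube d)} [IsFiniteMeasure μ]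
    (hμ : ∃ᶠ j in atTop, ChargesLevel μ j) {h : ℝ} (h0 : 0 < h) (hhd : h ≤ d) :
    ENNReal.ofReal h ≤ dimH (levelSet μ h) := by
  obtain ⟨J, hJ, hJμ, hstep⟩ := exists_sparse_sequence hμ (le_blockEnd h0 hhd)
  set Z : Set ℕ := ⋃ n, Ico (J n) (blockEnd d h (J n) + 1)
  have hac : ∀ t : ℝ≥0, 0 < t → (t : ℝ) < h →
      digitMeasure d Z ≪ Measure.hausdorffMeasure (t : ℝ) := fun t ht0 ht => by
    obtain ⟨K, hK⟩ := exists_mul_le_freeCount_add h0 hhd hJ hstep t.2 ht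
    exact digitMeasure_absolutelyContinuous d Z ht0 hK
  have hnear : digitMeasure d Z
      (⋂ n, nearDyadic d (J n) (blockEnd d h (J n) + 1))ᶜ = 0 := by
    rw [digitMeasure, Measure.map_apply (measurable_digitPoint d Z)
      (MeasurableSet.iInter fun n => measurableSet_nearDyadic _ _ _).compl]
    convert measure_empty (μ := Measure.pi fun _ : Fin d => coinMeasure)
    refine eq_empty_of_forall_notMem fun ω hω => hω (mem_iInter.2 fun n => ?_)
    exact digitPoint_mem_nearDyadic d ((le_blockEnd h0 hhd _).trans (Nat.le_succ _))
      (subset_iUnion (fun n => Ico (J n) (blockEnd d h (J n) + 1)) n) ω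
  have hcompl : digitMeasure d Z (levelSet μ h)ᶜ = 0 := by
    refine measure_mono_null (fun x hx => ?_)
      (measure_union_null hnear (measure_setOf_locDim_lt_eq_zero μ _ h0 hac))
    by_contra hcon
    rw [mem_union, not_or, notMem_compl_iff] at hcon
    exact hx (le_antisymm (locDim_le_of_mem_nearDyadic hd h0 hhd hJ hJμ (mem_iInter.1 hcon.1))
      (not_lt.1 hcon.2))
  refine ENNReal.le_of_forall_nnreal_lt fun t ht => ?_
  rcases eq_zero_or_pos t with rfl | ht0
  · simp
  have ht' : (t : ℝ) < h := by
    rwa [ENNReal.lt_ofReal_iff_toReal_lt ENNReal.coe_ne_top, ENNReal.coe_toReal] at ht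
  refine le_dimH_of_hausdorffMeasure_ne_zero fun hzero => ?_
  have huniv := measure_union_null (hac t ht0 ht' hzero) hcompl
  rw [union_compl_self, measure_univ] at huniv
  exact one_ne_zero huniv

theorem dimH_levelSet {d : ℕ} (hd : 1 ≤ d) {μ : Measure (Cube d)} [IsFiniteMeasure μ]
    (hμ : ∃ᶠ j in atTop, ChargesLevel μ j) {h : ℝ} (hh : h ∈ Icc (0 : ℝ) d) :
    dimH (levelSet μ h) = ENNReal.ofReal h := by
  refine le_antisymm ?_ ?_
  · lift h to ℝ≥0 using hh.1
    rw [ENNReal.ofReal_coe_nnreal]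
    exact (dimH_mono fun x hx => le_of_eq hx).trans (dimH_setOf_locDim_le μ h)
  · rcases hh.1.eq_or_lt with rfl | h0
    · simp
    · exact le_dimH_levelSet hd hμ h0 hh.2

/-- There is a dense `Gδ` set `R` of probability measures on `[0,1]^d`
(with the weak topology) such that every `μ ∈ R` satisfies the multifractal formalism at
every exponent `h ∈ [0,d]`: `dim_H E_μ(h) = inf_{q ∈ ℝ} (qh - τ_μ(q))`. -/
theorem typical_measures_multifractal_formalism (d : ℕ) (hd : 1 ≤ d) :
    ∃ R : Set (ProbabilityMeasure (Cube d)), IsGδ R ∧ Dense R ∧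
      ∀ μ ∈ R, ∀ h ∈ Set.Icc (0 : ℝ) (d : ℝ),
        (dimH (levelSet (μ : Measure (Cube d)) h) : EReal) =
          ⨅ q : ℝ, ((q * h : ℝ) : EReal) - lqSpectrum (μ : Measure (Cube d)) q := by
  refine ⟨typicalSet d, isGδ_typicalSet d, dense_typicalSet d, fun μ hμ h hh => ?_⟩
  have hfreq := frequently_chargesLevel_of_mem_typicalSet hμ
  rw [iInf_sub_lqSpectrum hfreq hh, dimH_levelSet hd hfreq hh, EReal.coe_ennreal_ofReal,
    max_eq_left hh.1]
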